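/- arXiv:1702.07104 — 2 statements merged into one kernel-verified Lean document; each statement's English description precedes it below -/
import Mathlib

section
/- The function τ_ρ : W × W → ℤ defined by τ_ρ(w₁, w₂) = 1 if ℓ(w₁) and ℓ(w₂) are both odd, and τ_ρ(w₁, w₂) = 0 otherwise, is a normalized 2-cocycle of W with coefficients in the trivial W-module ℤ (i.e. τ_ρ(w₂,w₃) − τ_ρ(w₁w₂,w₃) + τ_ρ(w₁,w₂w₃) − τ_ρ(w₁,w₂) = 0 for all w₁,w₂,w₃ ∈ W, and τ_ρ(1,w) = τ_ρ(w,1) = 0). Moreover, if all reflections of W are conjugate (c(W) = 1), then the cohomology class of τ_ρ in H²(W, ℤ) is nonzero, i.e. τ_ρ is not a coboundary. -/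
/-!
For `n ≥ 1`, the extension `0 → ℤ → ℤ → ℤ/n → 0` attaches to a character `ε : G → ℤ/n` a
Bockstein class in `H²(G, ℤ)`, the obstruction to lifting `ε` to a homomorphism `G → ℤ`. Since
homomorphisms to `ℤ` vanish on torsion elements, the class is nonzero as soon as `ε` is nontrivial
on some element of finite order. For the length parity `W → ℤ/2` of a Coxeter group, the class is
represented by `τ_ρ`, and a simple reflection is such an element.
-/

section Bockstein

variable {G : Type*} [Monoid G] {n : ℕ} (ε : G →* Multiplicative (ZMod n))

/-- The carry cocycle representing the Bockstein image in `H²(G, ℤ)` of a character `ε` with values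
in `ℤ/n`. It is computed from the representatives of `ε g` in `{0, …, n - 1}`: the value at `(g, h)`
is the carry, `0` or `1`, when the representatives of `ε g` and `ε h` are added modulo `n ≠ 0`. -/
def bocksteinCocycle (g h : G) : ℤ :=
  ((ε g).toAdd.val + (ε h).toAdd.val) / n

@[simp]
lemma bocksteinCocycle_one_left [NeZero n] (g : G) : bocksteinCocycle ε 1 g = 0 := by
  have val_lt : (ε g).toAdd.val < n := ZMod.val_lt _
  simpa [bocksteinCocycle] using
    Int.ediv_eq_zero_of_lt (Int.natCast_nonneg _) (Int.ofNat_lt.mpr val_lt)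

lemma bocksteinCocycle_comm (g h : G) : bocksteinCocycle ε g h = bocksteinCocycle ε h g := by
  simp only [bocksteinCocycle, add_comm]

@[simp]
lemma bocksteinCocycle_one_right [NeZero n] (g : G) : bocksteinCocycle ε g 1 = 0 := by
  rw [bocksteinCocycle_comm, bocksteinCocycle_one_left]

lemma natCast_mul_bocksteinCocycle [NeZero n] (g h : G) :
    n * bocksteinCocycle ε g h =
      (ε g).toAdd.val + (ε h).toAdd.val - (ε (g * h)).toAdd.val := by
  rw [map_mul, toAdd_mul, ZMod.val_add, bocksteinCocycle]
  push_cast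
  linarith [Int.mul_ediv_add_emod ((ε g).toAdd.val + (ε h).toAdd.val : ℤ) n]

-- `n` times the cocycle is a coboundary, and `n` can be cancelled in `ℤ`.
theorem bocksteinCocycle_isCocycle [NeZero n] (g₁ g₂ g₃ : G) :
    bocksteinCocycle ε g₂ g₃ - bocksteinCocycle ε (g₁ * g₂) g₃ +
      bocksteinCocycle ε g₁ (g₂ * g₃) - bocksteinCocycle ε g₁ g₂ = 0 := by
  have n_ne_zero : (n : ℤ) ≠ 0 := NeZero.ne _
  refine (mul_eq_zero.mp ?_).resolve_left n_ne_zero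
  simp only [mul_sub, mul_add, natCast_mul_bocksteinCocycle, mul_assoc]
  ring

theorem exists_lift_of_bocksteinCocycle_eq_coboundary [NeZero n] {f : G → ℤ}
    (hf : ∀ g h, bocksteinCocycle ε g h = f h - f (g * h) + f g) :
    ∃ φ : G →* Multiplicative ℤ, ∀ g, ((φ g).toAdd : ZMod n) = (ε g).toAdd := by
  let lift (g : G) : ℤ := (ε g).toAdd.val - n * f g
  have lift_mul (g h : G) : lift (g * h) = lift g + lift h := by
    have := natCast_mul_bocksteinCocycle ε g h
    rw [hf] at this
    simp only [lift]
    linarith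
  let φ : G →* Multiplicative ℤ :=
    { toFun g := .ofAdd (lift g)
      map_one' := congrArg _ (by simpa using lift_mul 1 1 : lift 1 = 0)
      map_mul' g h := congrArg _ (lift_mul g h) }
  exact ⟨φ, fun g ↦ by simp [φ, lift]⟩

theorem bocksteinCocycle_ne_coboundary_of_isOfFinOrder [NeZero n] {g : G} (hg : IsOfFinOrder g)
    (hεg : ε g ≠ 1) : ¬ ∃ f : G → ℤ, ∀ g h, bocksteinCocycle ε g h = f h - f (g * h) + f g := by
  rintro ⟨f, hf⟩
  obtain ⟨φ, hφ⟩ := exists_lift_of_bocksteinCocycle_eq_coboundary ε hf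
  have φ_g : φ g = 1 := (φ.isOfFinOrder hg).eq_one'
  exact hεg (toAdd_eq_zero.mp (by simpa [φ_g] using (hφ g).symm))

end Bockstein

section Coxeter

variable {B W : Type*} [Group W] {M : CoxeterMatrix B} (cs : CoxeterSystem M W)

lemma bocksteinCocycle_lengthParity (w₁ w₂ : W) :
    bocksteinCocycle cs.lengthParity w₁ w₂ =
      if Odd (cs.length w₁) ∧ Odd (cs.length w₂) then 1 else 0 := by
  simp only [bocksteinCocycle, cs.lengthParity_eq_ofAdd_length, toAdd_ofAdd, ZMod.val_natCast,
    Nat.odd_iff]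
  split_ifs <;> omega

theorem bocksteinCocycle_lengthParity_ne_coboundary [Nonempty B] :
    ¬ ∃ f : W → ℤ, ∀ w₁ w₂,
      bocksteinCocycle cs.lengthParity w₁ w₂ = f w₂ - f (w₁ * w₂) + f w₁ := by
  obtain ⟨i⟩ := ‹Nonempty B›
  have simple_isOfFinOrder : IsOfFinOrder (cs.simple i) :=
    isOfFinOrder_iff_pow_eq_one.mpr ⟨2, two_pos, cs.simple_sq i⟩
  have lengthParity_simple_ne_one : cs.lengthParity (cs.simple i) ≠ 1 := by
    rw [cs.lengthParity_simple]
    decide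
  exact bocksteinCocycle_ne_coboundary_of_isOfFinOrder _ simple_isOfFinOrder
    lengthParity_simple_ne_one

theorem stmt_15_general [Nonempty B] (τ : W → W → ℤ)
    (hτ : ∀ w₁ w₂ : W, τ w₁ w₂ =
      if Odd (cs.length w₁) ∧ Odd (cs.length w₂) then 1 else 0) :
    (∀ w₁ w₂ w₃ : W,
      τ w₂ w₃ - τ (w₁ * w₂) w₃ + τ w₁ (w₂ * w₃) - τ w₁ w₂ = 0) ∧
    (∀ w : W, τ 1 w = 0 ∧ τ w 1 = 0) ∧
    ¬ ∃ f : W → ℤ, ∀ w₁ w₂ : W, τ w₁ w₂ = f w₂ - f (w₁ * w₂) + f w₁ := by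
  obtain rfl : τ = bocksteinCocycle cs.lengthParity := by
    ext w₁ w₂
    rw [hτ, bocksteinCocycle_lengthParity]
  exact ⟨bocksteinCocycle_isCocycle _,
    fun w ↦ ⟨bocksteinCocycle_one_left _ w, bocksteinCocycle_one_right _ w⟩,
    bocksteinCocycle_lengthParity_ne_coboundary cs⟩

end Coxeter

/-- The function `τ_ρ(w₁, w₂) = 1` if `ℓ(w₁)` and `ℓ(w₂)` are both odd and `0` otherwise is
a normalized 2-cocycle of `W` with coefficients in the trivial `W`-module `ℤ`; moreover, if
all reflections of `W` are conjugate (`c(W) = 1`), then `τ_ρ` is not a coboundary, i.e. its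
class in `H²(W, ℤ)` is nonzero. -/
theorem stmt_15 {B : Type} [Fintype B] [Nonempty B] {W : Type} [Group W]
    {M : CoxeterMatrix B} (cs : CoxeterSystem M W)
    (τ : W → W → ℤ)
    (hτ : ∀ w₁ w₂ : W, τ w₁ w₂ =
      if Odd (cs.length w₁) ∧ Odd (cs.length w₂) then 1 else 0) :
    (∀ w₁ w₂ w₃ : W,
      τ w₂ w₃ - τ (w₁ * w₂) w₃ + τ w₁ (w₂ * w₃) - τ w₁ w₂ = 0) ∧
    (∀ w : W, τ 1 w = 0 ∧ τ w 1 = 0) ∧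
    ((∀ t t' : W, cs.IsReflection t → cs.IsReflection t' → IsConj t t') →
      ¬ ∃ f : W → ℤ, ∀ w₁ w₂ : W, τ w₁ w₂ = f w₂ - f (w₁ * w₂) + f w₁) := by
  obtain ⟨cocycle, normalized, not_coboundary⟩ := stmt_15_general cs τ hτ
  exact ⟨cocycle, normalized, fun _ ↦ not_coboundary⟩
end

section
/- The canonical surjection φ : Ad(Q_W) → W, e_x ↦ x, restricts to a group isomorphism from the commutator subgroup [Ad(Q_W), Ad(Q_W)] onto the commutator subgroup [W, W]; that is, φ maps [Ad(Q_W), Ad(Q_W)] onto [W,W] and is injective on [Ad(Q_W), Ad(Q_W)]. -/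
/-!
Write `e x` for the generator of `Ad(Q)` attached to `x`, for an involutory rack `Q`.

The squares `e x ^ 2` are central, so `e x ↦ e x ^ 2` extends to a homomorphism `D` from `Ad(Q)` to
its center. If `D g` is a product of commutators, then the class of `g` in the abelianization has
trivial square; the abelianization being free abelian on the orbits of `Q`, this class is trivial,
and `D g = 1` since `D` has abelian target. Hence the subgroup generated by the squares meets
`[Ad(Q), Ad(Q)]` trivially.

For the reflections of a Coxeter group, this subgroup is the kernel of `φ`. Indeed, if
`f : Ad(Q) → K` kills the squares, then some `z` in `Q` satisfies `φ (e z) = (s t) ^ m * t` and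
`f (e z) = (a b) ^ m * b`, where `s = φ (e x)`, `t = φ (e y)`, `a = f (e x)`, `b = f (e y)`. When
`(s t) ^ m = 1`, injectivity of `φ` on generators gives `z = y`, so `(a b) ^ m = 1`: the relations
of `W` hold in `K`, and `f` factors through `φ`.
-/

open Quandles Rack CoxeterSystem

variable {B : Type} [Fintype B] {W : Type} [Group W] {M : CoxeterMatrix B}

/-- The Coxeter quandle `Q_W`: the set of reflections of `W`, with operation given by
conjugation. (Since reflections are involutions, `x ◃ y = x y x⁻¹ = x⁻¹ y x`.) -/
def CoxeterQuandle (cs : CoxeterSystem M W) : Type := {w : W // cs.IsReflection w}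

instance (cs : CoxeterSystem M W) : Quandle (CoxeterQuandle cs) where
  act x y := ⟨x.1 * y.1 * x.1⁻¹, y.2.conj x.1⟩
  self_distrib := by
    rintro ⟨x, _⟩ ⟨y, _⟩ ⟨z, _⟩
    apply Subtype.ext
    show x * (y * z * y⁻¹) * x⁻¹ = (x * y * x⁻¹) * (x * z * x⁻¹) * (x * y * x⁻¹)⁻¹
    group
  invAct x y := ⟨x.1⁻¹ * y.1 * x.1, by simpa using y.2.conj x.1⁻¹⟩
  left_inv := by
    rintro ⟨x, _⟩ ⟨y, _⟩
    apply Subtype.ext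
    show x⁻¹ * (x * y * x⁻¹) * x = y
    group
  right_inv := by
    rintro ⟨x, _⟩ ⟨y, _⟩
    apply Subtype.ext
    show x * (x⁻¹ * y * x) * x⁻¹ = y
    group
  fix := by
    rintro ⟨x, hx⟩
    apply Subtype.ext
    show x * x * x⁻¹ = x
    group

/-- The canonical generator `e_x` of the adjoint (enveloping) group `Ad(Q_W)` of the
Coxeter quandle, associated with the reflection `x`. -/
def coxE (cs : CoxeterSystem M W) (x : CoxeterQuandle cs) :
    EnvelGroup (CoxeterQuandle cs) :=
  Rack.toEnvelGroup (CoxeterQuandle cs) x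

section EnvelopingGroup

variable {Q G : Type*} [Rack Q] [Group G]

theorem toEnvelGroup_act (x y : Q) : toEnvelGroup Q (x ◃ y) =
    toEnvelGroup Q x * toEnvelGroup Q y * (toEnvelGroup Q x)⁻¹ :=
  (toEnvelGroup Q).map_act

theorem map_toEnvelGroup_act (f : EnvelGroup Q →* G) (x y : Q) :
    f (toEnvelGroup Q (x ◃ y)) =
      f (toEnvelGroup Q x) * f (toEnvelGroup Q y) * (f (toEnvelGroup Q x))⁻¹ := by
  rw [toEnvelGroup_act, map_mul, map_mul, map_inv]

theorem envelGroup_hom_ext {f g : EnvelGroup Q →* G}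
    (h : ∀ x, f (toEnvelGroup Q x) = g (toEnvelGroup Q x)) : f = g :=
  toEnvelGroup.map.symm.injective (DFunLike.ext _ _ h)

/-- The homomorphism from the enveloping group to a commutative group induced by a function that is
constant on the orbits of the rack. -/
def envelGroupLiftComm {A : Type*} [CommGroup A] (f : Q → A) (hf : ∀ x y, f (x ◃ y) = f y) :
    EnvelGroup Q →* A :=
  toEnvelGroup.map
    { toFun := f
      map_act' := by
        intro x y
        rw [hf, Quandle.conj_act_eq_conj]
        exact (mul_inv_cancel_comm (f x) (f y)).symm }

end EnvelopingGroup

section Abelianization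

variable (Q : Type*) [Rack Q]

/-- The orbits of a rack under its left translations, which index a basis of the abelianized
enveloping group. Translations being invertible, it suffices to identify `x` with each `z ◃ x`. -/
def RackOrbits : Type _ := Quot fun x y : Q => ∃ z, z ◃ x = y

variable {Q} in
/-- The orbit of an element of a rack. -/
def RackOrbits.mk (x : Q) : RackOrbits Q := Quot.mk _ x

variable {Q} in
theorem RackOrbits.mk_act (x y : Q) : RackOrbits.mk (x ◃ y) = RackOrbits.mk y :=
  (Quot.sound ⟨x, rfl⟩).symm

theorem abelianization_of_toEnvelGroup_act (x y : Q) :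
    Abelianization.of (toEnvelGroup Q (x ◃ y)) = Abelianization.of (toEnvelGroup Q y) := by
  rw [map_toEnvelGroup_act, mul_inv_cancel_comm]

/-- The homomorphism from the abelianized enveloping group to the free abelian group on the orbits
that sends the class of `e x` to the orbit of `x`. -/
def abelianizationEnvelGroupToFree :
    Abelianization (EnvelGroup Q) →* Multiplicative (FreeAbelianGroup (RackOrbits Q)) :=
  Abelianization.lift (envelGroupLiftComm
    (fun x => Multiplicative.ofAdd (FreeAbelianGroup.of (RackOrbits.mk x)))
    fun x y => by rw [RackOrbits.mk_act])

/-- The homomorphism from the free abelian group on the orbits to the abelianized enveloping group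
that sends the orbit of `x` to the class of `e x`. -/
def freeToAbelianizationEnvelGroup :
    Multiplicative (FreeAbelianGroup (RackOrbits Q)) →* Abelianization (EnvelGroup Q) :=
  AddMonoidHom.toMultiplicativeLeft (FreeAbelianGroup.lift
    (Quot.lift (fun x => Additive.ofMul (Abelianization.of (toEnvelGroup Q x))) (by
      rintro x _ ⟨z, rfl⟩
      rw [abelianization_of_toEnvelGroup_act])))

variable {Q} in
theorem freeToAbelianizationEnvelGroup_ofAdd_of_mk (x : Q) :
    freeToAbelianizationEnvelGroup Q
      (Multiplicative.ofAdd (FreeAbelianGroup.of (RackOrbits.mk x))) =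
        Abelianization.of (toEnvelGroup Q x) :=
  congrArg Additive.toMul (FreeAbelianGroup.lift_apply_of _ (RackOrbits.mk x))

theorem leftInverse_freeToAbelianizationEnvelGroup : Function.LeftInverse
    (freeToAbelianizationEnvelGroup Q) (abelianizationEnvelGroupToFree Q) := by
  have comp_eq_id : (freeToAbelianizationEnvelGroup Q).comp (abelianizationEnvelGroupToFree Q) =
      MonoidHom.id _ :=
    Abelianization.hom_ext _ _ (envelGroup_hom_ext freeToAbelianizationEnvelGroup_ofAdd_of_mk)
  exact DFunLike.congr_fun comp_eq_id

instance isMulTorsionFree_abelianization_envelGroup :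
    IsMulTorsionFree (Abelianization (EnvelGroup Q)) :=
  have : IsAddTorsionFree (FreeAbelianGroup (RackOrbits Q)) :=
    Function.Injective.isAddTorsionFree FreeAbelianGroup.toFinsupp
      (FreeAbelianGroup.equivFinsupp _).injective
  Function.Injective.isMulTorsionFree (abelianizationEnvelGroupToFree Q)
    (leftInverse_freeToAbelianizationEnvelGroup Q).injective

end Abelianization

section InvolutoryRack

open scoped IsMulCommutative

variable {Q : Type*} [Rack Q]

theorem toEnvelGroup_sq_mem_center (hQ : IsInvolutory Q) (x : Q) :
    toEnvelGroup Q x ^ 2 ∈ Subgroup.center (EnvelGroup Q) := by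
  have conj_eq_id :
      (MulAut.conj (toEnvelGroup Q x ^ 2)).toMonoidHom = MonoidHom.id (EnvelGroup Q) := by
    refine envelGroup_hom_ext fun y => ?_
    calc toEnvelGroup Q x ^ 2 * toEnvelGroup Q y * (toEnvelGroup Q x ^ 2)⁻¹
        = toEnvelGroup Q (x ◃ x ◃ y) := by
          rw [toEnvelGroup_act, toEnvelGroup_act, sq]
          group
      _ = toEnvelGroup Q y := by rw [hQ x y]
  exact Subgroup.mem_center_iff.2 fun g =>
    (mul_inv_eq_iff_eq_mul.1 (DFunLike.congr_fun conj_eq_id g)).symm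

/-- The homomorphism `e x ↦ e x ^ 2` from the enveloping group of an involutory rack to its
center. -/
def centralSquareHom (hQ : IsInvolutory Q) :
    EnvelGroup Q →* Subgroup.center (EnvelGroup Q) :=
  envelGroupLiftComm (fun x => ⟨toEnvelGroup Q x ^ 2, toEnvelGroup_sq_mem_center hQ x⟩) (by
    intro x y
    apply Subtype.ext
    change toEnvelGroup Q (x ◃ y) ^ 2 = toEnvelGroup Q y ^ 2
    rw [toEnvelGroup_act, conj_pow, mul_inv_eq_iff_eq_mul]
    exact Subgroup.mem_center_iff.1 (toEnvelGroup_sq_mem_center hQ y) _)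

theorem abelianization_of_centralSquareHom (hQ : IsInvolutory Q) (g : EnvelGroup Q) :
    Abelianization.of (centralSquareHom hQ g : EnvelGroup Q) = Abelianization.of g ^ 2 := by
  have comp_eq : Abelianization.of.comp ((Subgroup.center _).subtype.comp (centralSquareHom hQ)) =
      (powMonoidHom 2).comp Abelianization.of :=
    envelGroup_hom_ext fun x => map_pow Abelianization.of (toEnvelGroup Q x) 2
  exact DFunLike.congr_fun comp_eq g

theorem centralSquareHom_eq_one_of_mem_commutator (hQ : IsInvolutory Q) {g : EnvelGroup Q}
    (hg : (centralSquareHom hQ g : EnvelGroup Q) ∈ commutator (EnvelGroup Q)) :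
    centralSquareHom hQ g = 1 := by
  have of_sq : Abelianization.of g ^ 2 = 1 := by
    rw [← abelianization_of_centralSquareHom hQ]
    rwa [← Abelianization.ker_of] at hg
  have of_eq_one : Abelianization.of g = 1 := (pow_eq_one_iff_left two_ne_zero).1 of_sq
  have mem_commutator : g ∈ commutator (EnvelGroup Q) := by
    rwa [← Abelianization.ker_of]
  have commutator_le_ker : commutator (EnvelGroup Q) ≤ (centralSquareHom hQ).ker :=
    Abelianization.commutator_subset_ker _
  exact commutator_le_ker mem_commutator

theorem normalClosure_sq_le_range_centralSquareHom (hQ : IsInvolutory Q) :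
    Subgroup.normalClosure (Set.range fun x : Q => toEnvelGroup Q x ^ 2) ≤
      ((Subgroup.center _).subtype.comp (centralSquareHom hQ)).range := by
  have normal_range : ((Subgroup.center _).subtype.comp (centralSquareHom hQ)).range.Normal := by
    refine ⟨?_⟩
    rintro _ ⟨h, rfl⟩ g
    exact ⟨h, eq_mul_inv_of_mul_eq (Subgroup.mem_center_iff.1 (centralSquareHom hQ h).2 g).symm⟩
  refine Subgroup.normalClosure_le_normal ?_
  rintro _ ⟨x, rfl⟩
  exact ⟨toEnvelGroup Q x, rfl⟩

theorem disjoint_normalClosure_sq_commutator (hQ : IsInvolutory Q) :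
    Disjoint (Subgroup.normalClosure (Set.range fun x : Q => toEnvelGroup Q x ^ 2))
      (commutator (EnvelGroup Q)) := by
  rw [Subgroup.disjoint_def]
  intro c hc hcomm
  obtain ⟨g, rfl⟩ := normalClosure_sq_le_range_centralSquareHom hQ hc
  exact congrArg Subtype.val (centralSquareHom_eq_one_of_mem_commutator hQ hcomm)

end InvolutoryRack

section Involutions

variable {Q G K : Type*} [Rack Q] [Group G] [Group K]

theorem isInvolutory_of_injective {φ : EnvelGroup Q →* G}
    (hinj : Function.Injective fun x => φ (toEnvelGroup Q x))
    (hsq : ∀ x, φ (toEnvelGroup Q x) ^ 2 = 1) : IsInvolutory Q := by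
  intro x y
  apply hinj
  simp only [map_toEnvelGroup_act]
  calc φ (toEnvelGroup Q x) * (φ (toEnvelGroup Q x) * φ (toEnvelGroup Q y) *
        (φ (toEnvelGroup Q x))⁻¹) * (φ (toEnvelGroup Q x))⁻¹
      = φ (toEnvelGroup Q x) ^ 2 * φ (toEnvelGroup Q y) * (φ (toEnvelGroup Q x) ^ 2)⁻¹ := by
        rw [sq]
        group
    _ = φ (toEnvelGroup Q y) := by rw [hsq, one_mul, inv_one, mul_one]

theorem exists_map_toEnvelGroup_eq_pow_mul (f : EnvelGroup Q →* G)
    {x y : Q} (hx : f (toEnvelGroup Q x) ^ 2 = 1) (hy : f (toEnvelGroup Q y) ^ 2 = 1) (n : ℕ) :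
    ∃ z, f (toEnvelGroup Q z) =
      (f (toEnvelGroup Q x) * f (toEnvelGroup Q y)) ^ n * f (toEnvelGroup Q y) := by
  induction n using Nat.twoStepInduction with
  | zero => exact ⟨y, by simp⟩
  | one => exact ⟨x, by rw [pow_one, mul_assoc, ← sq, hy, mul_one]⟩
  | more n ih _ =>
    obtain ⟨z, hz⟩ := ih
    refine ⟨x ◃ y ◃ z, ?_⟩
    rw [map_toEnvelGroup_act, map_toEnvelGroup_act, hz]
    set a := f (toEnvelGroup Q x)
    set b := f (toEnvelGroup Q y)
    have inv_a : a⁻¹ = a := inv_eq_of_mul_eq_one_left (by rwa [← sq])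
    calc a * (b * ((a * b) ^ n * b) * b⁻¹) * a⁻¹ = (a * b) ^ (n + 1) * a⁻¹ := by group
      _ = (a * b) ^ (n + 1) * (a * b ^ 2) := by rw [inv_a, hy, mul_one]
      _ = (a * b) ^ (n + 2) * b := by
        rw [pow_succ _ (n + 1), sq]
        simp only [mul_assoc]

theorem mul_pow_eq_one_of_injective {φ : EnvelGroup Q →* G} {f : EnvelGroup Q →* K}
    (hinj : Function.Injective fun x => φ (toEnvelGroup Q x))
    (hφ : ∀ x, φ (toEnvelGroup Q x) ^ 2 = 1) (hf : ∀ x, f (toEnvelGroup Q x) ^ 2 = 1)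
    {x y : Q} {m : ℕ} (h : (φ (toEnvelGroup Q x) * φ (toEnvelGroup Q y)) ^ m = 1) :
    (f (toEnvelGroup Q x) * f (toEnvelGroup Q y)) ^ m = 1 := by
  obtain ⟨z, hz⟩ := exists_map_toEnvelGroup_eq_pow_mul (φ.prod f)
    (Prod.ext (hφ x) (hf x)) (Prod.ext (hφ y) (hf y)) m
  obtain ⟨hφz, hfz⟩ := Prod.ext_iff.1 hz
  change φ _ = (φ _ * φ _) ^ m * φ _ at hφz
  change f _ = (f _ * f _) ^ m * f _ at hfz
  rw [h, one_mul] at hφz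
  rw [hinj hφz] at hfz
  exact mul_eq_right.1 hfz.symm

end Involutions

section CoxeterGroup

variable {B W Q K : Type*} [Group W] [Rack Q] [Group K] {M : CoxeterMatrix B}
  {cs : CoxeterSystem M W} {φ : EnvelGroup Q →* W}

theorem exists_map_toEnvelGroup_eq_simple
    (hrange : (Set.range fun x => φ (toEnvelGroup Q x)) = {t | cs.IsReflection t}) (i : B) :
    ∃ x, φ (toEnvelGroup Q x) = cs.simple i :=
  hrange.superset (cs.isReflection_simple i)

theorem envelGroup_hom_ext_simple
    (hrange : (Set.range fun x => φ (toEnvelGroup Q x)) = {t | cs.IsReflection t})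
    {f g : EnvelGroup Q →* K}
    (h : ∀ x i, φ (toEnvelGroup Q x) = cs.simple i → f (toEnvelGroup Q x) = g (toEnvelGroup Q x)) :
    f = g := by
  refine envelGroup_hom_ext fun x => ?_
  obtain ⟨w, i, hx⟩ : cs.IsReflection (φ (toEnvelGroup Q x)) := hrange.subset ⟨x, rfl⟩
  induction w using cs.simple_induction_left generalizing x with
  | one => exact h x i (by simpa using hx)
  | mul_simple_left w j ih =>
    obtain ⟨y, hy⟩ := exists_map_toEnvelGroup_eq_simple hrange j
    have hyx := ih (y ◃ x) (by
      rw [map_toEnvelGroup_act, hy, hx]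
      simp only [mul_inv_rev, mul_assoc, cs.inv_simple, cs.simple_mul_simple_cancel_left,
        cs.simple_mul_simple_self, mul_one])
    rw [map_toEnvelGroup_act, map_toEnvelGroup_act, h y j hy] at hyx
    exact mul_left_cancel (mul_right_cancel hyx)

theorem exists_comp_eq_of_sq_eq_one (hinj : Function.Injective fun x => φ (toEnvelGroup Q x))
    (hrange : (Set.range fun x => φ (toEnvelGroup Q x)) = {t | cs.IsReflection t})
    {f : EnvelGroup Q →* K} (hf : ∀ x, f (toEnvelGroup Q x) ^ 2 = 1) :
    ∃ ψ : W →* K, ψ.comp φ = f := by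
  have hφ (x : Q) : φ (toEnvelGroup Q x) ^ 2 = 1 := (hrange.subset ⟨x, rfl⟩).pow_two
  choose x hx using exists_map_toEnvelGroup_eq_simple hrange
  have liftable : M.IsLiftable fun i => f (toEnvelGroup Q (x i)) := fun i j =>
    mul_pow_eq_one_of_injective hinj hφ hf (by rw [hx, hx, cs.simple_mul_simple_pow])
  refine ⟨cs.lift ⟨_, liftable⟩, envelGroup_hom_ext_simple hrange ?_⟩
  intro y i hy
  have y_eq : y = x i := hinj (hy.trans (hx i).symm)
  rw [MonoidHom.comp_apply, hy, cs.lift_apply_simple liftable, y_eq]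

theorem ker_le_normalClosure_sq (hinj : Function.Injective fun x => φ (toEnvelGroup Q x))
    (hrange : (Set.range fun x => φ (toEnvelGroup Q x)) = {t | cs.IsReflection t}) :
    φ.ker ≤ Subgroup.normalClosure (Set.range fun x : Q => toEnvelGroup Q x ^ 2) := by
  set N := Subgroup.normalClosure (Set.range fun x : Q => toEnvelGroup Q x ^ 2)
  obtain ⟨ψ, hψ⟩ := exists_comp_eq_of_sq_eq_one hinj hrange (f := QuotientGroup.mk' N) fun x =>
    (QuotientGroup.eq_one_iff _).2 (Subgroup.subset_normalClosure ⟨x, rfl⟩)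
  calc φ.ker ≤ (ψ.comp φ).ker := fun g hg => by
        rw [MonoidHom.mem_ker, MonoidHom.comp_apply, hg, map_one]
    _ = N := by rw [hψ, QuotientGroup.ker_mk']

theorem surjective_of_range_eq_isReflection
    (hrange : (Set.range fun x => φ (toEnvelGroup Q x)) = {t | cs.IsReflection t}) :
    Function.Surjective φ := by
  rw [← MonoidHom.range_eq_top, eq_top_iff, ← cs.subgroup_closure_range_simple,
    Subgroup.closure_le]
  rintro _ ⟨i, rfl⟩
  obtain ⟨x, hx⟩ := exists_map_toEnvelGroup_eq_simple hrange i
  exact ⟨toEnvelGroup Q x, hx⟩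

end CoxeterGroup

theorem stmt_16_general {B W Q : Type*} [Group W] [Rack Q] {M : CoxeterMatrix B}
    (cs : CoxeterSystem M W) (φ : EnvelGroup Q →* W)
    (hinj : Function.Injective fun x => φ (toEnvelGroup Q x))
    (hrange : (Set.range fun x => φ (toEnvelGroup Q x)) = {t | cs.IsReflection t}) :
    Subgroup.map φ (commutator (EnvelGroup Q)) = commutator W ∧
      Set.InjOn φ (commutator (EnvelGroup Q) : Set (EnvelGroup Q)) := by
  have hQ : IsInvolutory Q :=
    isInvolutory_of_injective hinj fun x => (hrange.subset ⟨x, rfl⟩).pow_two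
  have disjoint_ker : Disjoint φ.ker (commutator (EnvelGroup Q)) :=
    (disjoint_normalClosure_sq_commutator hQ).mono_left (ker_le_normalClosure_sq hinj hrange)
  constructor
  · rw [map_commutator_eq, MonoidHom.range_eq_top.2 (surjective_of_range_eq_isReflection hrange),
      commutator_def]
  · exact (Set.injOn_iff_map_eq_one φ (commutator (EnvelGroup Q))).2 fun g hg hφg =>
      Subgroup.disjoint_def.1 disjoint_ker hφg hg

/-- The canonical surjection `φ : Ad(Q_W) → W`, `e_x ↦ x`, restricts to a group isomorphism
from the commutator subgroup `[Ad(Q_W), Ad(Q_W)]` onto `[W, W]`: it maps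
`[Ad(Q_W), Ad(Q_W)]` onto `[W,W]` and is injective on `[Ad(Q_W), Ad(Q_W)]`. -/
theorem stmt_16 (cs : CoxeterSystem M W)
    (φ : EnvelGroup (CoxeterQuandle cs) →* W)
    (hφ : ∀ x : CoxeterQuandle cs, φ (coxE cs x) = x.1) :
    Subgroup.map φ (commutator (EnvelGroup (CoxeterQuandle cs))) = commutator W ∧
    Set.InjOn φ (commutator (EnvelGroup (CoxeterQuandle cs)) : Set _) := by
  have hval : (fun x => φ (toEnvelGroup (CoxeterQuandle cs) x)) = Subtype.val := funext hφ
  exact stmt_16_general cs φ (hval ▸ Subtype.val_injective) (hval ▸ Subtype.range_coe)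
end
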